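/- Let M be a matching of maximum weight among all matchings of size n/3 in G. Then w(X_i) ≥ w(Y_i) for each i ∈ {1, 3, 4, 8}, w(M_3) = w(Y_7), w(M_4) = w(Y_5), and w(Y_5) ≥ w(X_5). -/

import Mathlib

open Finset
open scoped Classical

namespace MW3PP

/-- A 3-path `xyz`: a path on three distinct vertices with middle vertex `y`. -/
structure P3 (V : Type*) where
  x : V
  y : V
  z : V
  hxy : x ≠ y
  hyz : y ≠ z
  hxz : x ≠ z

variable {V : Type*} [Fintype V] [DecidableEq V]

/-- The vertex set of a 3-path. -/
def P3.verts (p : P3 V) : Finset V := {p.x, p.y, p.z}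

/-- The two edges of a 3-path. -/
def P3.edges (p : P3 V) : Finset (Sym2 V) := {s(p.x, p.y), s(p.y, p.z)}

/-- The weight of a 3-path. -/
def P3.wt (w : Sym2 V → ℝ) (p : P3 V) : ℝ := w s(p.x, p.y) + w s(p.y, p.z)

/-- The total weight of a set of edges. -/
def ew (w : Sym2 V → ℝ) (F : Finset (Sym2 V)) : ℝ := ∑ e ∈ F, w e

/-- The total weight of a set of 3-paths. -/
def pw (w : Sym2 V → ℝ) (P : Finset (P3 V)) : ℝ := ∑ p ∈ P, p.wt w

/-- `∑_{xyz ∈ S} max (w (xy)) (w (yz))`. -/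
def maxSum (w : Sym2 V → ℝ) (S : Finset (P3 V)) : ℝ :=
  ∑ p ∈ S, max (w s(p.x, p.y)) (w s(p.y, p.z))

/-- A perfect 3-path packing: `n/3` pairwise vertex-disjoint 3-paths covering all vertices. -/
def IsPacking (P : Finset (P3 V)) : Prop :=
  P.card = Fintype.card V / 3 ∧
  (∀ p ∈ P, ∀ q ∈ P, p ≠ q → Disjoint p.verts q.verts) ∧
  (∀ v : V, ∃ p ∈ P, v ∈ p.verts)

/-- A maximum-weight perfect 3-path packing. -/
def IsMaxPacking (w : Sym2 V → ℝ) (P : Finset (P3 V)) : Prop :=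
  IsPacking P ∧ ∀ Q : Finset (P3 V), IsPacking Q → pw w Q ≤ pw w P

/-- A matching: a set of pairwise vertex-disjoint (non-loop) edges. -/
def IsMatching (M : Finset (Sym2 V)) : Prop :=
  (∀ e ∈ M, ¬ e.IsDiag) ∧
  ∀ e ∈ M, ∀ f ∈ M, e ≠ f → ∀ v : V, v ∈ e → v ∉ f

/-- A maximum-weight matching among all matchings of size `k`. -/
def IsMaxMatchingOfSize (w : Sym2 V → ℝ) (k : ℕ) (M : Finset (Sym2 V)) : Prop :=
  IsMatching M ∧ M.card = k ∧
  ∀ M' : Finset (Sym2 V), IsMatching M' → M'.card = k → ew w M' ≤ ew w M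

/-- `v ∈ V(M)` : vertex `v` is covered by the matching `M`. -/
def covered (M : Finset (Sym2 V)) (v : V) : Prop := ∃ e ∈ M, v ∈ e

/-- `e_u` : the edge of `M` containing `u` (junk value if there is none). -/
noncomputable def eMatch (M : Finset (Sym2 V)) (u : V) : Sym2 V :=
  if h : ∃ e ∈ M, u ∈ e then h.choose else s(u, u)

/-- The cost `c` of an edge with respect to a matching `M`:
`c(uv) = w(uv) - min (w (e_u)) (w (e_v))` if both endpoints are covered by `M`,
and `c(uv) = w(uv)` otherwise. -/
noncomputable def cost (w : Sym2 V → ℝ) (M : Finset (Sym2 V)) : Sym2 V → ℝ :=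
  Sym2.lift ⟨fun u v =>
    if covered M u ∧ covered M v then
      w s(u, v) - min (w (eMatch M u)) (w (eMatch M v))
    else w s(u, v), by
      intro u v
      dsimp only
      by_cases h : covered M u ∧ covered M v
      · rw [if_pos h, if_pos (show covered M v ∧ covered M u from ⟨h.2, h.1⟩),
          Sym2.eq_swap, min_comm]
      · rw [if_neg h, if_neg (show ¬(covered M v ∧ covered M u) from fun h' => h ⟨h'.2, h'.1⟩),
          Sym2.eq_swap]⟩

/-- The total cost of a set of edges. -/
noncomputable def cw (w : Sym2 V → ℝ) (M F : Finset (Sym2 V)) : ℝ := ∑ e ∈ F, cost w M e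

/-- The number of vertices of the 3-path `p` covered by `M`. -/
noncomputable def kcnt (M : Finset (Sym2 V)) (p : P3 V) : ℕ :=
  (p.verts.filter fun v => covered M v).card

/-- Exactly one of the two edges of `p` lies in `M`. -/
def exOne (M : Finset (Sym2 V)) (p : P3 V) : Prop :=
  (s(p.x, p.y) ∈ M ∧ s(p.y, p.z) ∉ M) ∨ (s(p.x, p.y) ∉ M ∧ s(p.y, p.z) ∈ M)

def cls1 (M : Finset (Sym2 V)) (p : P3 V) : Prop := kcnt M p = 0
def cls2 (M : Finset (Sym2 V)) (p : P3 V) : Prop := kcnt M p = 1 ∧ ¬ covered M p.y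
def cls3 (M : Finset (Sym2 V)) (p : P3 V) : Prop := kcnt M p = 1 ∧ covered M p.y
def cls4 (M : Finset (Sym2 V)) (p : P3 V) : Prop := kcnt M p = 2 ∧ ¬ covered M p.y
def cls5 (M : Finset (Sym2 V)) (p : P3 V) : Prop := kcnt M p = 2 ∧ covered M p.y ∧ exOne M p
def cls6 (M : Finset (Sym2 V)) (p : P3 V) : Prop :=
  kcnt M p = 2 ∧ covered M p.y ∧ s(p.x, p.y) ∉ M ∧ s(p.y, p.z) ∉ M
def cls7 (M : Finset (Sym2 V)) (p : P3 V) : Prop := kcnt M p = 3 ∧ exOne M p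
def cls8 (M : Finset (Sym2 V)) (p : P3 V) : Prop :=
  kcnt M p = 3 ∧ s(p.x, p.y) ∉ M ∧ s(p.y, p.z) ∉ M

/-- The subset of a set of 3-paths satisfying a predicate. -/
noncomputable def psel (P : Finset (P3 V)) (c : P3 V → Prop) : Finset (P3 V) := P.filter c

/-- The set of all edges of the 3-paths in `S`. -/
def Esub (S : Finset (P3 V)) : Finset (Sym2 V) := S.biUnion P3.edges

/-- The heaviest edge of a 3-path (the edge `xy` in case of a tie). -/
noncomputable def heavy (w : Sym2 V → ℝ) (p : P3 V) : Sym2 V :=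
  if w s(p.y, p.z) ≤ w s(p.x, p.y) then s(p.x, p.y) else s(p.y, p.z)

noncomputable def X1 (w : Sym2 V → ℝ) (P : Finset (P3 V)) (M : Finset (Sym2 V)) :
    Finset (Sym2 V) := (psel P (cls1 M)).image (heavy w)
noncomputable def X2 (P : Finset (P3 V)) (M : Finset (Sym2 V)) : Finset (Sym2 V) :=
  (psel P (cls2 M)).image fun p => if covered M p.x then s(p.x, p.y) else s(p.y, p.z)
noncomputable def X3 (w : Sym2 V → ℝ) (P : Finset (P3 V)) (M : Finset (Sym2 V)) :
    Finset (Sym2 V) := (psel P (cls3 M)).image (heavy w)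
noncomputable def X4 (w : Sym2 V → ℝ) (P : Finset (P3 V)) (M : Finset (Sym2 V)) :
    Finset (Sym2 V) := (psel P (cls4 M)).image (heavy w)
noncomputable def X5 (P : Finset (P3 V)) (M : Finset (Sym2 V)) : Finset (Sym2 V) :=
  (psel P (cls5 M)).image fun p => if s(p.x, p.y) ∈ M then s(p.y, p.z) else s(p.x, p.y)
noncomputable def X6 (P : Finset (P3 V)) (M : Finset (Sym2 V)) : Finset (Sym2 V) :=
  (psel P (cls6 M)).image fun p => if covered M p.x then s(p.y, p.z) else s(p.x, p.y)
noncomputable def X7 (P : Finset (P3 V)) (M : Finset (Sym2 V)) : Finset (Sym2 V) :=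
  (psel P (cls7 M)).image fun p => if s(p.x, p.y) ∈ M then s(p.y, p.z) else s(p.x, p.y)
noncomputable def X8 (w : Sym2 V → ℝ) (P : Finset (P3 V)) (M : Finset (Sym2 V)) :
    Finset (Sym2 V) := (psel P (cls8 M)).image (heavy w)

noncomputable def Y1 (w : Sym2 V → ℝ) (P : Finset (P3 V)) (M : Finset (Sym2 V)) :
    Finset (Sym2 V) := Esub (psel P (cls1 M)) \ X1 w P M
noncomputable def Y2 (P : Finset (P3 V)) (M : Finset (Sym2 V)) : Finset (Sym2 V) :=
  Esub (psel P (cls2 M)) \ X2 P M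
noncomputable def Y3 (w : Sym2 V → ℝ) (P : Finset (P3 V)) (M : Finset (Sym2 V)) :
    Finset (Sym2 V) := Esub (psel P (cls3 M)) \ X3 w P M
noncomputable def Y4 (w : Sym2 V → ℝ) (P : Finset (P3 V)) (M : Finset (Sym2 V)) :
    Finset (Sym2 V) := Esub (psel P (cls4 M)) \ X4 w P M
noncomputable def Y5 (P : Finset (P3 V)) (M : Finset (Sym2 V)) : Finset (Sym2 V) :=
  Esub (psel P (cls5 M)) \ X5 P M
noncomputable def Y6 (P : Finset (P3 V)) (M : Finset (Sym2 V)) : Finset (Sym2 V) :=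
  Esub (psel P (cls6 M)) \ X6 P M
noncomputable def Y7 (P : Finset (P3 V)) (M : Finset (Sym2 V)) : Finset (Sym2 V) :=
  Esub (psel P (cls7 M)) \ X7 P M
noncomputable def Y8 (w : Sym2 V → ℝ) (P : Finset (P3 V)) (M : Finset (Sym2 V)) :
    Finset (Sym2 V) := Esub (psel P (cls8 M)) \ X8 w P M

/-- An edge is a middle edge (w.r.t. `M`) if exactly one of its endpoints lies in `V(M)`. -/
def isMiddle (M : Finset (Sym2 V)) (e : Sym2 V) : Prop :=
  ∃ u v : V, e = s(u, v) ∧ covered M u ∧ ¬ covered M v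

/-- Two edges share a vertex. -/
def shares (e f : Sym2 V) : Prop := ∃ v, v ∈ e ∧ v ∈ f

/-- `g` is a middle edge of some 3-path in `S`. -/
def middleIn (M : Finset (Sym2 V)) (S : Finset (P3 V)) (g : Sym2 V) : Prop :=
  (∃ p ∈ S, g ∈ p.edges) ∧ isMiddle M g

/-- The 3-paths of `P` lying in classes 2, 3 or 4. -/
noncomputable def P234 (P : Finset (P3 V)) (M : Finset (Sym2 V)) : Finset (P3 V) :=
  psel P fun p => cls2 M p ∨ cls3 M p ∨ cls4 M p

/-- `M_1`: edges of `M` sharing a vertex with at least one middle edge of a 3-path of `P*_6`. -/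
noncomputable def Mset1 (P : Finset (P3 V)) (M : Finset (Sym2 V)) : Finset (Sym2 V) :=
  M.filter fun f => ∃ g, middleIn M (psel P (cls6 M)) g ∧ shares f g

/-- `M_2`: edges of `M` sharing a vertex with at least one middle edge, all middle edges met
belonging to 3-paths of `P*_2 ∪ P*_3 ∪ P*_4`. -/
noncomputable def Mset2 (P : Finset (P3 V)) (M : Finset (Sym2 V)) : Finset (Sym2 V) :=
  M.filter fun f =>
    (∃ g, middleIn M P g ∧ shares f g) ∧
    ∀ g, middleIn M P g → shares f g → middleIn M (P234 P M) g

/-- `M_3 = M ∩ E(P*_7)`. -/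
noncomputable def Mset3 (P : Finset (P3 V)) (M : Finset (Sym2 V)) : Finset (Sym2 V) :=
  M ∩ Esub (psel P (cls7 M))

/-- `M_4 = M ∩ E(P*_5)`. -/
noncomputable def Mset4 (P : Finset (P3 V)) (M : Finset (Sym2 V)) : Finset (Sym2 V) :=
  M ∩ Esub (psel P (cls5 M))

/-- The middle edges of 3-paths of `P*_6`. -/
noncomputable def mid6 (P : Finset (P3 V)) (M : Finset (Sym2 V)) : Finset (Sym2 V) :=
  (Esub (psel P (cls6 M))).filter (isMiddle M)

/-- `M'_1`: edges of `M_1` meeting exactly one middle edge of a 3-path of `P*_6` and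
no middle edge of a 3-path of `P*_2 ∪ P*_3 ∪ P*_4`. -/
noncomputable def Mset1' (P : Finset (P3 V)) (M : Finset (Sym2 V)) : Finset (Sym2 V) :=
  (Mset1 P M).filter fun f =>
    ((mid6 P M).filter fun g => shares f g).card = 1 ∧
    ∀ g, middleIn M (P234 P M) g → ¬ shares f g

/-- `M''_1`: edges of `M_1` meeting two middle edges of 3-paths of `P*_6`. -/
noncomputable def Mset1'' (P : Finset (P3 V)) (M : Finset (Sym2 V)) : Finset (Sym2 V) :=
  (Mset1 P M).filter fun f => ((mid6 P M).filter fun g => shares f g).card = 2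

/-- `M'''_1`: edges of `M_1` meeting exactly one middle edge of a 3-path of `P*_6` and
at least one middle edge of a 3-path of `P*_2 ∪ P*_3 ∪ P*_4`. -/
noncomputable def Mset1''' (P : Finset (P3 V)) (M : Finset (Sym2 V)) : Finset (Sym2 V) :=
  (Mset1 P M).filter fun f =>
    ((mid6 P M).filter fun g => shares f g).card = 1 ∧
    ∃ g, middleIn M (P234 P M) g ∧ shares f g

/-- Assumption on `P*`: for every 3-path `xyz ∈ P*` with `y ∉ V(M)` and `x, z ∈ V(M)`,
the vertices `x` and `z` lie in two distinct edges of `M`. -/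
def Ass (P : Finset (P3 V)) (M : Finset (Sym2 V)) : Prop :=
  ∀ p ∈ P, ¬ covered M p.y → covered M p.x → covered M p.z →
    ∃ e ∈ M, ∃ f ∈ M, p.x ∈ e ∧ p.z ∈ f ∧ e ≠ f

/-- An admissible edge w.r.t. `M`: either both endpoints are in `V(M)` and lie in two distinct
edges of `M`, or exactly one endpoint is in `V(M)`. -/
def goodEdge (M : Finset (Sym2 V)) (e : Sym2 V) : Prop :=
  (∃ u v : V, e = s(u, v) ∧ covered M u ∧ covered M v ∧ ∀ f ∈ M, ¬(u ∈ f ∧ v ∈ f)) ∨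
  (∃ u v : V, e = s(u, v) ∧ covered M u ∧ ¬ covered M v)

/-!
In an edge-disjoint family of 3-paths the edges split path by path, so `w(Y_i) ≤ w(X_i)` holds as
soon as the edge selected from each path carries at least half of its weight. A path with exactly
one edge in `M` contributes its edge outside `M` to `X_5` or `X_7`, which leaves its edge in `M`.
For a path of `P*_5` the endpoint off the matching edge is uncovered, so the other edge can be
exchanged for the matching edge; maximality of `M` then says that the matching edge is the heavier
one.
-/

section

omit [Fintype V]

omit [DecidableEq V] in
theorem P3.fst_edge_ne_snd_edge (p : P3 V) : s(p.x, p.y) ≠ s(p.y, p.z) := by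
  simp [p.hxy, p.hxz]

theorem P3.mem_edges {p : P3 V} {e : Sym2 V} :
    e ∈ p.edges ↔ e = s(p.x, p.y) ∨ e = s(p.y, p.z) := by
  simp only [P3.edges, mem_insert, mem_singleton]

theorem P3.y_mem_of_mem_edges {p : P3 V} {e : Sym2 V} (he : e ∈ p.edges) : p.y ∈ e := by
  rcases P3.mem_edges.1 he with rfl | rfl
  · exact Sym2.mem_mk_right _ _
  · exact Sym2.mem_mk_left _ _

theorem P3.mem_verts_of_mem_edges {p : P3 V} {e : Sym2 V} {v : V} (he : e ∈ p.edges)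
    (hv : v ∈ e) : v ∈ p.verts := by
  rcases P3.mem_edges.1 he with rfl | rfl <;> rcases Sym2.mem_iff.1 hv with rfl | rfl <;>
    simp [P3.verts]

theorem P3.disjoint_edges_of_disjoint_verts {p q : P3 V} (h : Disjoint p.verts q.verts) :
    Disjoint p.edges q.edges :=
  disjoint_left.2 fun _ hp hq =>
    have hy := P3.y_mem_of_mem_edges hp
    disjoint_left.1 h (P3.mem_verts_of_mem_edges hp hy) (P3.mem_verts_of_mem_edges hq hy)

theorem P3.ew_edges (w : Sym2 V → ℝ) (p : P3 V) : ew w p.edges = p.wt w :=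
  sum_pair p.fst_edge_ne_snd_edge

theorem P3.card_verts (p : P3 V) : p.verts.card = 3 :=
  card_eq_three.2 ⟨p.x, p.y, p.z, p.hxy, p.hxz, p.hyz, rfl⟩

theorem kcnt_eq_three {M : Finset (Sym2 V)} {p : P3 V} (hx : covered M p.x)
    (hy : covered M p.y) (hz : covered M p.z) : kcnt M p = 3 := by
  rw [kcnt, filter_true_of_mem (by simp [P3.verts, hx, hy, hz]), p.card_verts]

section Selection

variable {S : Finset (P3 V)} {f : P3 V → Sym2 V}

theorem ew_Esub (hS : (S : Set (P3 V)).PairwiseDisjoint P3.edges) (w : Sym2 V → ℝ) :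
    ew w (Esub S) = pw w S :=
  (sum_biUnion hS).trans (sum_congr rfl fun p _ => p.ew_edges w)

theorem injOn_of_mem_edges (hS : (S : Set (P3 V)).PairwiseDisjoint P3.edges)
    (hf : ∀ p ∈ S, f p ∈ p.edges) : Set.InjOn f S := fun p hp q hq hpq =>
  hS.elim_finset hp hq (f p) (hf p hp) (hpq ▸ hf q hq)

theorem ew_image (hS : (S : Set (P3 V)).PairwiseDisjoint P3.edges)
    (hf : ∀ p ∈ S, f p ∈ p.edges) (w : Sym2 V → ℝ) : ew w (S.image f) = ∑ p ∈ S, w (f p) :=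
  sum_image (injOn_of_mem_edges hS hf)

theorem image_subset_Esub (hf : ∀ p ∈ S, f p ∈ p.edges) : S.image f ⊆ Esub S :=
  image_subset_iff.2 fun p hp => mem_biUnion.2 ⟨p, hp, hf p hp⟩

theorem ew_sdiff_image_add_ew_image (hS : (S : Set (P3 V)).PairwiseDisjoint P3.edges)
    (hf : ∀ p ∈ S, f p ∈ p.edges) (w : Sym2 V → ℝ) :
    ew w (Esub S \ S.image f) + ew w (S.image f) = pw w S :=
  (sum_sdiff (image_subset_Esub hf)).trans (ew_Esub hS w)

theorem ew_sdiff_image_le_ew_image (hS : (S : Set (P3 V)).PairwiseDisjoint P3.edges)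
    (hf : ∀ p ∈ S, f p ∈ p.edges) {w : Sym2 V → ℝ} (hw : ∀ p ∈ S, p.wt w ≤ 2 * w (f p)) :
    ew w (Esub S \ S.image f) ≤ ew w (S.image f) := by
  have hsplit := ew_sdiff_image_add_ew_image hS hf w
  have hhalf : pw w S ≤ 2 * ew w (S.image f) := by
    rw [ew_image hS hf, mul_sum]
    exact sum_le_sum hw
  linarith

theorem ew_image_le_ew_sdiff_image (hS : (S : Set (P3 V)).PairwiseDisjoint P3.edges)
    (hf : ∀ p ∈ S, f p ∈ p.edges) {w : Sym2 V → ℝ} (hw : ∀ p ∈ S, 2 * w (f p) ≤ p.wt w) :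
    ew w (S.image f) ≤ ew w (Esub S \ S.image f) := by
  have hsplit := ew_sdiff_image_add_ew_image hS hf w
  have hhalf : 2 * ew w (S.image f) ≤ pw w S := by
    rw [ew_image hS hf, mul_sum]
    exact sum_le_sum hw
  linarith

end Selection

theorem heavy_mem_edges (w : Sym2 V → ℝ) (p : P3 V) : heavy w p ∈ p.edges := by
  rw [P3.mem_edges, heavy]
  exact ite_eq_or_eq _ _ _

omit [DecidableEq V] in
theorem P3.wt_le_two_mul_heavy (w : Sym2 V → ℝ) (p : P3 V) : p.wt w ≤ 2 * w (heavy w p) := by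
  unfold P3.wt heavy
  split_ifs <;> linarith

theorem ew_sdiff_heavy_le {S : Finset (P3 V)}
    (hS : (S : Set (P3 V)).PairwiseDisjoint P3.edges) (w : Sym2 V → ℝ) :
    ew w (Esub S \ S.image (heavy w)) ≤ ew w (S.image (heavy w)) :=
  ew_sdiff_image_le_ew_image hS (fun p _ => heavy_mem_edges w p) fun p _ =>
    p.wt_le_two_mul_heavy w

/-- The edge of a 3-path outside `M`, for a path with exactly one edge in `M`; otherwise one of
its two edges, according to the convention of `X5` and `X7`. -/
def unmatchedEdge (M : Finset (Sym2 V)) (p : P3 V) : Sym2 V :=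
  if s(p.x, p.y) ∈ M then s(p.y, p.z) else s(p.x, p.y)

theorem unmatchedEdge_mem_edges (M : Finset (Sym2 V)) (p : P3 V) :
    unmatchedEdge M p ∈ p.edges := by
  rw [P3.mem_edges, unmatchedEdge]
  exact (ite_eq_or_eq _ _ _).symm

theorem exOne.mem_iff_ne_unmatchedEdge {M : Finset (Sym2 V)} {p : P3 V} (hp : exOne M p)
    {e : Sym2 V} (he : e ∈ p.edges) : e ∈ M ↔ e ≠ unmatchedEdge M p := by
  have hne := p.fst_edge_ne_snd_edge
  rcases hp with ⟨hxy, hyz⟩ | ⟨hxy, hyz⟩ <;> rcases P3.mem_edges.1 he with rfl | rfl <;>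
    simp [unmatchedEdge, hxy, hyz, hne, hne.symm]

theorem exOne.unmatchedEdge_notMem {M : Finset (Sym2 V)} {p : P3 V} (hp : exOne M p) :
    unmatchedEdge M p ∉ M := fun h =>
  (hp.mem_iff_ne_unmatchedEdge (unmatchedEdge_mem_edges M p)).1 h rfl

theorem inter_Esub_eq_sdiff_image_unmatchedEdge {M : Finset (Sym2 V)} {S : Finset (P3 V)}
    (hS : ∀ p ∈ S, exOne M p) : M ∩ Esub S = Esub S \ S.image (unmatchedEdge M) := by
  ext e
  rw [mem_inter, mem_sdiff, and_comm]
  refine and_congr_right fun he => ⟨fun heM himage => ?_, fun himage => ?_⟩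
  · obtain ⟨p, hp, rfl⟩ := mem_image.1 himage
    exact (hS p hp).unmatchedEdge_notMem heM
  · obtain ⟨p, hp, hpe⟩ := mem_biUnion.1 he
    exact ((hS p hp).mem_iff_ne_unmatchedEdge hpe).2 fun h =>
      himage (h ▸ mem_image_of_mem _ hp)

omit [DecidableEq V] in
theorem IsMatching.mono {M N : Finset (Sym2 V)} (hM : IsMatching M) (hNM : N ⊆ M) :
    IsMatching N :=
  ⟨fun e he => hM.1 e (hNM he), fun e he f hf => hM.2 e (hNM he) f (hNM hf)⟩

omit [DecidableEq V] in
theorem covered.mono {M N : Finset (Sym2 V)} {v : V} (hv : covered N v) (hNM : N ⊆ M) :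
    covered M v :=
  let ⟨e, he, hve⟩ := hv
  ⟨e, hNM he, hve⟩

theorem IsMatching.not_covered_erase {M : Finset (Sym2 V)} (hM : IsMatching M) {e : Sym2 V}
    (he : e ∈ M) {v : V} (hv : v ∈ e) : ¬ covered (M.erase e) v := by
  rintro ⟨f, hf, hvf⟩
  obtain ⟨hfe, hfM⟩ := mem_erase.1 hf
  exact hM.2 f hfM e he hfe v hvf hv

theorem IsMatching.insert {M : Finset (Sym2 V)} (hM : IsMatching M) {e : Sym2 V}
    (he : ¬ e.IsDiag) (hcov : ∀ v ∈ e, ¬ covered M v) : IsMatching (insert e M) := by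
  refine ⟨(forall_mem_insert _ _ _).2 ⟨he, hM.1⟩, fun f hf g hg hfg v hvf hvg => ?_⟩
  rcases mem_insert.1 hf with rfl | hfM <;> rcases mem_insert.1 hg with rfl | hgM
  · exact hfg rfl
  · exact hcov v hvf ⟨g, hgM, hvg⟩
  · exact hcov v hvg ⟨f, hfM, hvf⟩
  · exact hM.2 f hfM g hgM hfg v hvf hvg

theorem IsMaxMatchingOfSize.weight_le_of_not_covered_erase {w : Sym2 V → ℝ} {k : ℕ}
    {M : Finset (Sym2 V)} (hM : IsMaxMatchingOfSize w k M) {e f : Sym2 V} (he : e ∈ M)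
    (hf : ¬ f.IsDiag) (hcov : ∀ v ∈ f, ¬ covered (M.erase e) v) : w f ≤ w e := by
  obtain ⟨hmatching, hcard, hmax⟩ := hM
  have hfM : f ∉ M.erase e := fun h => hcov _ f.out_fst_mem ⟨f, h, f.out_fst_mem⟩
  have hexchange : IsMatching (insert f (M.erase e)) :=
    (hmatching.mono (erase_subset e M)).insert hf hcov
  have hle : ew w (insert f (M.erase e)) ≤ ew w M :=
    hmax _ hexchange (by rw [card_insert_of_notMem hfM, card_erase_add_one he, hcard])
  rw [ew, ew, sum_insert hfM, ← add_sum_erase M w he] at hle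
  exact le_of_add_le_add_right hle

omit [DecidableEq V] in
theorem IsMaxMatchingOfSize.weight_le_of_not_covered {w : Sym2 V → ℝ} {k : ℕ}
    {M : Finset (Sym2 V)} (hM : IsMaxMatchingOfSize w k M) {a b c : V} (hab : s(a, b) ∈ M)
    (hc : ¬ covered M c) : w s(b, c) ≤ w s(a, b) := by
  refine hM.weight_le_of_not_covered_erase hab ?_ fun v hv => ?_
  · rw [Sym2.mk_isDiag_iff]
    rintro rfl
    exact hc ⟨_, hab, Sym2.mem_mk_right _ _⟩
  · rcases Sym2.mem_iff.1 hv with rfl | rfl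
    · exact hM.1.not_covered_erase hab (Sym2.mem_mk_right _ _)
    · exact fun h => hc (h.mono (erase_subset _ _))

theorem IsMaxMatchingOfSize.two_mul_unmatchedEdge_le_wt {w : Sym2 V → ℝ} {k : ℕ}
    {M : Finset (Sym2 V)} (hM : IsMaxMatchingOfSize w k M) {p : P3 V} (hk : kcnt M p ≠ 3)
    (hp : exOne M p) : 2 * w (unmatchedEdge M p) ≤ p.wt w := by
  rcases hp with ⟨hxy, -⟩ | ⟨hxy, hyz⟩
  · have hz : ¬ covered M p.z := fun hz =>
      hk (kcnt_eq_three ⟨_, hxy, Sym2.mem_mk_left _ _⟩ ⟨_, hxy, Sym2.mem_mk_right _ _⟩ hz)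
    have hle : w s(p.y, p.z) ≤ w s(p.x, p.y) := hM.weight_le_of_not_covered hxy hz
    rw [unmatchedEdge, if_pos hxy, P3.wt]
    linarith
  · have hx : ¬ covered M p.x := fun hx =>
      hk (kcnt_eq_three hx ⟨_, hyz, Sym2.mem_mk_left _ _⟩ ⟨_, hyz, Sym2.mem_mk_right _ _⟩)
    have hle : w s(p.x, p.y) ≤ w s(p.y, p.z) := by
      rw [Sym2.eq_swap (a := p.x), Sym2.eq_swap (a := p.y) (b := p.z)]
      exact hM.weight_le_of_not_covered (Sym2.eq_swap ▸ hyz) hx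
    rw [unmatchedEdge, if_neg hxy, P3.wt]
    linarith

theorem statement_6_general {w : Sym2 V → ℝ} {k : ℕ} {M : Finset (Sym2 V)}
    (hM : IsMaxMatchingOfSize w k M) {P : Finset (P3 V)}
    (hP : (P : Set (P3 V)).PairwiseDisjoint P3.edges) :
    ew w (Y1 w P M) ≤ ew w (X1 w P M) ∧
    ew w (Y3 w P M) ≤ ew w (X3 w P M) ∧
    ew w (Y4 w P M) ≤ ew w (X4 w P M) ∧
    ew w (Y8 w P M) ≤ ew w (X8 w P M) ∧
    ew w (Mset3 P M) = ew w (Y7 P M) ∧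
    ew w (Mset4 P M) = ew w (Y5 P M) ∧
    ew w (X5 P M) ≤ ew w (Y5 P M) := by
  have hsel (c : P3 V → Prop) : (psel P c : Set (P3 V)).PairwiseDisjoint P3.edges :=
    hP.subset (coe_subset.2 (filter_subset c P))
  have hcls5 : ∀ p ∈ psel P (cls5 M), cls5 M p := fun p hp => (mem_filter.1 hp).2
  have hcls7 : ∀ p ∈ psel P (cls7 M), cls7 M p := fun p hp => (mem_filter.1 hp).2
  refine ⟨ew_sdiff_heavy_le (hsel _) w, ew_sdiff_heavy_le (hsel _) w,
    ew_sdiff_heavy_le (hsel _) w, ew_sdiff_heavy_le (hsel _) w, ?_, ?_, ?_⟩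
  · exact congrArg (ew w) (inter_Esub_eq_sdiff_image_unmatchedEdge fun p hp => (hcls7 p hp).2)
  · exact congrArg (ew w) (inter_Esub_eq_sdiff_image_unmatchedEdge fun p hp => (hcls5 p hp).2.2)
  · refine ew_image_le_ew_sdiff_image (hsel _) (fun p _ => unmatchedEdge_mem_edges M p)
      fun p hp => hM.two_mul_unmatchedEdge_le_wt ?_ (hcls5 p hp).2.2
    rw [(hcls5 p hp).1]
    decide

end

theorem IsPacking.pairwiseDisjoint_edges {P : Finset (P3 V)} (hP : IsPacking P) :
    (P : Set (P3 V)).PairwiseDisjoint P3.edges := fun p hp q hq hpq =>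
  P3.disjoint_edges_of_disjoint_verts (hP.2.1 p hp q hq hpq)

theorem statement_6 (n : ℕ) (hn : Fintype.card V = n) (h3 : 3 ∣ n)
    (w : Sym2 V → ℝ) (hw : ∀ e : Sym2 V, 0 ≤ w e)
    (M : Finset (Sym2 V)) (hM : IsMaxMatchingOfSize w (n / 3) M)
    (Pstar : Finset (P3 V)) (hP : IsMaxPacking w Pstar) (hAss : Ass Pstar M) :
    ew w (Y1 w Pstar M) ≤ ew w (X1 w Pstar M) ∧
    ew w (Y3 w Pstar M) ≤ ew w (X3 w Pstar M) ∧
    ew w (Y4 w Pstar M) ≤ ew w (X4 w Pstar M) ∧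
    ew w (Y8 w Pstar M) ≤ ew w (X8 w Pstar M) ∧
    ew w (Mset3 Pstar M) = ew w (Y7 Pstar M) ∧
    ew w (Mset4 Pstar M) = ew w (Y5 Pstar M) ∧
    ew w (X5 Pstar M) ≤ ew w (Y5 Pstar M) :=
  statement_6_general hM hP.1.pairwiseDisjoint_edges

end MW3PP
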